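/- arXiv:2009.10024 — 3 statements merged into one kernel-verified Lean document; each statement's English description precedes it below -/
import Mathlib

section
/- Let 𝒜 be an essentially small additive category with a weakly exact structure 𝒲, and let Mod 𝒜 denote the abelian category of additive functors 𝒜ᵒᵖ ⥤ Ab. Then the class of weakly effaceable functors (with respect to 𝒲) is closed under subquotients and finite direct sums in Mod 𝒜: any subobject of a weakly effaceable functor is weakly effaceable, any quotient object of a weakly effaceable functor is weakly effaceable, and the direct sum of two weakly effaceable functors is weakly effaceable. -/
open CategoryTheory CategoryTheory.Limits ZeroObject

universe w v u

namespace WeaklyExactPaper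

section Preamble

variable {C : Type u} [Category.{v} C] [Preadditive C] [HasZeroObject C] [HasBinaryBiproducts C]

/-- `(i, d)` is a kernel–cokernel pair: `i` is a kernel of `d` and `d` is a cokernel of `i`. -/
structure IsKernelCokernelPair {A B Z : C} (i : A ⟶ B) (d : B ⟶ Z) : Prop where
  w : i ≫ d = 0
  isKernel : Nonempty (IsLimit (KernelFork.ofι i w))
  isCokernel : Nonempty (IsColimit (CokernelCofork.ofπ d w))

/-- Isomorphism of composable pairs `(i, d) ≅ (i', d')`. -/
def PairIso {A B Z A' B' Z' : C} (i : A ⟶ B) (d : B ⟶ Z) (i' : A' ⟶ B') (d' : B' ⟶ Z') : Prop :=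
  ∃ (eA : A ≅ A') (eB : B ≅ B') (eZ : Z ≅ Z'),
    i ≫ eB.hom = eA.hom ≫ i' ∧ d ≫ eZ.hom = eB.hom ≫ d'

/-- `f` is a kernel of some morphism. -/
def IsSomeKernel {A B : C} (f : A ⟶ B) : Prop :=
  ∃ (Z : C) (g : B ⟶ Z) (w : f ≫ g = 0), Nonempty (IsLimit (KernelFork.ofι f w))

/-- `g` is a cokernel of some morphism. -/
def IsSomeCokernel {B Z : C} (g : B ⟶ Z) : Prop :=
  ∃ (A : C) (f : A ⟶ B) (w : f ≫ g = 0), Nonempty (IsColimit (CokernelCofork.ofπ g w))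

/-- `f` admits a cokernel. -/
def AdmitsCokernel {A B : C} (f : A ⟶ B) : Prop :=
  ∃ (Z : C) (g : B ⟶ Z) (w : f ≫ g = 0), Nonempty (IsColimit (CokernelCofork.ofπ g w))

/-- `g` admits a kernel. -/
def AdmitsKernel {B Z : C} (g : B ⟶ Z) : Prop :=
  ∃ (A : C) (f : A ⟶ B) (w : f ≫ g = 0), Nonempty (IsLimit (KernelFork.ofι f w))

/-- A weakly exact structure on an additive category: a class of kernel–cokernel pairs,
closed under isomorphisms of composable pairs and binary direct sums, containing the pairs
`(1_X, X ⟶ 0)` and `(0 ⟶ X, 1_X)`, and satisfying the pushout axiom (E2) and the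
pullback axiom (E2)ᵒᵖ. -/
structure WeaklyExactStructure (C : Type u) [Category.{v} C] [Preadditive C]
    [HasZeroObject C] [HasBinaryBiproducts C] where
  W : ∀ ⦃A B Z : C⦄, (A ⟶ B) → (B ⟶ Z) → Prop
  kc_of_mem : ∀ {A B Z : C} {i : A ⟶ B} {d : B ⟶ Z}, W i d → IsKernelCokernelPair i d
  iso_closed : ∀ {A B Z A' B' Z' : C} {i : A ⟶ B} {d : B ⟶ Z} {i' : A' ⟶ B'} {d' : B' ⟶ Z'},
    W i d → PairIso i d i' d' → W i' d'
  sum_mem : ∀ {A₁ B₁ Z₁ A₂ B₂ Z₂ : C} {i₁ : A₁ ⟶ B₁} {d₁ : B₁ ⟶ Z₁} {i₂ : A₂ ⟶ B₂}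
    {d₂ : B₂ ⟶ Z₂}, W i₁ d₁ → W i₂ d₂ → W (biprod.map i₁ i₂) (biprod.map d₁ d₂)
  id_zero_mem : ∀ X : C, W (𝟙 X) (0 : X ⟶ (0 : C))
  zero_id_mem : ∀ X : C, W (0 : (0 : C) ⟶ X) (𝟙 X)
  pushout_mem : ∀ {A B Z A' : C} {i : A ⟶ B} {d : B ⟶ Z}, W i d → ∀ t : A ⟶ A',
    ∃ (S : C) (g : B ⟶ S) (i' : A' ⟶ S), IsPushout i t g i' ∧ ∃ (Z' : C) (d' : S ⟶ Z'), W i' d'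
  pullback_mem : ∀ {A B Z D : C} {i : A ⟶ B} {d : B ⟶ Z}, W i d → ∀ t : D ⟶ Z,
    ∃ (P : C) (p : P ⟶ B) (q : P ⟶ D), IsPullback p q d t ∧ ∃ (A'' : C) (i'' : A'' ⟶ P), W i'' q

/-- `i` is an admissible monic of `𝒲`. -/
def AdmissibleMonic (𝒲 : WeaklyExactStructure C) {A B : C} (i : A ⟶ B) : Prop :=
  ∃ (Z : C) (d : B ⟶ Z), 𝒲.W i d

/-- `d` is an admissible epic of `𝒲`. -/
def AdmissibleEpic (𝒲 : WeaklyExactStructure C) {B Z : C} (d : B ⟶ Z) : Prop :=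
  ∃ (A : C) (i : A ⟶ B), 𝒲.W i d

/-- `(i, d)` is a split kernel–cokernel pair. -/
def IsSplitPair {A B Z : C} (i : A ⟶ B) (d : B ⟶ Z) : Prop :=
  ∃ (X Y : C), PairIso (biprod.inl : X ⟶ X ⊞ Y) (biprod.snd : X ⊞ Y ⟶ Y) i d

end Preamble

section Statement

variable {C : Type u} [SmallCategory C] [Preadditive C] [HasZeroObject C] [HasBinaryBiproducts C]

/-- `F` is weakly effaceable with respect to `𝒲`: every element `z ∈ F(Z)` is killed by
pulling back along some admissible epic (deflation) of `𝒲`. -/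
def WeaklyEffaceable (𝒲 : WeaklyExactStructure C) (F : Cᵒᵖ ⥤ AddCommGrpCat.{u}) : Prop :=
  ∀ (Z : C) (z : F.obj (Opposite.op Z)), ∃ (Y : C) (g : Y ⟶ Z),
    AdmissibleEpic 𝒲 g ∧ F.map g.op z = 0

/-- The weakly effaceable right `𝒜`-modules are closed under subobjects, quotient objects and
finite direct sums in `Mod 𝒜`. -/
theorem statement15 (𝒲 : WeaklyExactStructure C) :
    (∀ (F G : Cᵒᵖ ⥤ AddCommGrpCat.{u}) (φ : G ⟶ F), Mono φ → F.Additive → G.Additive →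
      WeaklyEffaceable 𝒲 F → WeaklyEffaceable 𝒲 G) ∧
    (∀ (F G : Cᵒᵖ ⥤ AddCommGrpCat.{u}) (φ : F ⟶ G), Epi φ → F.Additive → G.Additive →
      WeaklyEffaceable 𝒲 F → WeaklyEffaceable 𝒲 G) ∧
    (∀ F G : Cᵒᵖ ⥤ AddCommGrpCat.{u}, F.Additive → G.Additive →
      WeaklyEffaceable 𝒲 F → WeaklyEffaceable 𝒲 G → WeaklyEffaceable 𝒲 (F ⊞ G)) := by
  refine ⟨?_, ?_, ?_⟩
  · intro F G φ hφ _ _ hF Z z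
    obtain ⟨Y, g, hg, h⟩ := hF Z (φ.app _ z)
    refine ⟨Y, g, hg, ?_⟩
    have hm : Mono (φ.app (Opposite.op Y)) := inferInstance
    have hinj := (AddCommGrpCat.mono_iff_injective _).1 hm
    apply hinj
    have hn := ConcreteCategory.congr_hom (φ.naturality g.op) z
    simp only [ConcreteCategory.comp_apply] at hn
    rw [map_zero, hn, h]
  · intro F G φ hφ _ _ hF Z z
    have hm : Epi (φ.app (Opposite.op Z)) := inferInstance
    obtain ⟨x, rfl⟩ := (AddCommGrpCat.epi_iff_surjective _).1 hm z
    obtain ⟨Y, g, hg, h⟩ := hF Z x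
    refine ⟨Y, g, hg, ?_⟩
    have hn := ConcreteCategory.congr_hom (φ.naturality g.op) x
    simp only [ConcreteCategory.comp_apply] at hn
    rw [← hn, h, map_zero]
  · intro F G _ _ hF hG Z z
    obtain ⟨Y₁, g₁, ⟨A₁, i₁, h₁⟩, hz₁⟩ := hF Z ((biprod.fst : F ⊞ G ⟶ F).app _ z)
    obtain ⟨Y₂, g₂, ⟨A₂, i₂, h₂⟩, hz₂⟩ := hG Z ((biprod.snd : F ⊞ G ⟶ G).app _ z)
    obtain ⟨P, p, q, hp, hq⟩ := 𝒲.pullback_mem (𝒲.sum_mem h₁ h₂) (biprod.lift (𝟙 Z) (𝟙 Z))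
    refine ⟨P, q, hq, ?_⟩
    have e₁ : q = (p ≫ biprod.fst) ≫ g₁ := by
      simpa using (congrArg (fun t => t ≫ biprod.fst) hp.w).symm
    have e₂ : q = (p ≫ biprod.snd) ≫ g₂ := by
      simpa using (congrArg (fun t => t ≫ biprod.snd) hp.w).symm
    have k₁ : (biprod.fst : F ⊞ G ⟶ F).app _ ((F ⊞ G).map q.op z) = 0 := by
      have hn := ConcreteCategory.congr_hom ((biprod.fst : F ⊞ G ⟶ F).naturality q.op) z
      simp only [ConcreteCategory.comp_apply] at hn
      rw [hn, e₁, op_comp, F.map_comp, ConcreteCategory.comp_apply, hz₁, map_zero]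
    have k₂ : (biprod.snd : F ⊞ G ⟶ G).app _ ((F ⊞ G).map q.op z) = 0 := by
      have hn := ConcreteCategory.congr_hom ((biprod.snd : F ⊞ G ⟶ G).naturality q.op) z
      simp only [ConcreteCategory.comp_apply] at hn
      rw [hn, e₂, op_comp, G.map_comp, ConcreteCategory.comp_apply, hz₂, map_zero]
    have ht := ConcreteCategory.congr_hom
      (congrArg (fun t => NatTrans.app t (Opposite.op P)) (biprod.total (X := F) (Y := G)))
      ((F ⊞ G).map q.op z)
    simp only [NatTrans.app_add, NatTrans.comp_app, NatTrans.id_app, AddCommGrpCat.hom_add_apply,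
      ConcreteCategory.comp_apply, ConcreteCategory.id_apply] at ht
    rw [k₁, k₂, map_zero, map_zero, add_zero] at ht
    exact ht.symm

end Statement

end WeaklyExactPaper
end

section
/- Let 𝒜 be an essentially small additive category with a weakly exact structure 𝒲, and let Mod 𝒜 denote the abelian category of additive functors 𝒜ᵒᵖ ⥤ Ab. If φ : F ⟶ F' is a morphism in Mod 𝒜 where F and F' are each isomorphic to the contravariant defect of a pair in 𝒲, then both the kernel of φ and the cokernel of φ in Mod 𝒜 are again isomorphic to the contravariant defect of some pair in 𝒲. In other words, the category of defects of 𝒲 is closed under kernels and cokernels in Mod 𝒜. -/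
open CategoryTheory CategoryTheory.Limits ZeroObject

universe w v u

namespace WeaklyExactPaper

section Statement

variable {C : Type u} [SmallCategory C] [Preadditive C] [HasZeroObject C] [HasBinaryBiproducts C]

/-- `F` is (isomorphic to) the contravariant defect of a pair of `𝒲`, i.e. the cokernel in
`Mod 𝒜` of the map `Hom(−, B) ⟶ Hom(−, Z)` induced by the deflation of the pair. -/
def IsDefect (𝒲 : WeaklyExactStructure C) (F : Cᵒᵖ ⥤ AddCommGrpCat.{u}) : Prop :=
  ∃ (A B Z : C) (i : A ⟶ B) (d : B ⟶ Z), 𝒲.W i d ∧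
    Nonempty (F ≅ cokernel (preadditiveYoneda.map d))

/-- Kernel lemma data and auxiliary results. -/
theorem W_of_kernel (𝒲 : WeaklyExactStructure C) {A A' B Z : C} {i : A ⟶ B} {d : B ⟶ Z}
    (h : 𝒲.W i d) {i' : A' ⟶ B} {w : i' ≫ d = 0} (hk : IsLimit (KernelFork.ofι i' w)) :
    𝒲.W i' d := by
  obtain ⟨hi⟩ := (𝒲.kc_of_mem h).isKernel
  refine 𝒲.iso_closed h ⟨hi.conePointUniqueUpToIso hk, Iso.refl _, Iso.refl _, ?_, by simp⟩
  have := hi.conePointUniqueUpToIso_hom_comp hk WalkingParallelPair.zero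
  simpa using this.symm

theorem W_of_cokernel (𝒲 : WeaklyExactStructure C) {A B B' Z Z' : C} {i : A ⟶ B} {d : B ⟶ Z}
    (h : 𝒲.W i d) (e : B ≅ B') {i' : A ⟶ B'} (hi : i ≫ e.hom = i') {d' : B' ⟶ Z'}
    {w : i' ≫ d' = 0} (hk : IsColimit (CokernelCofork.ofπ d' w)) : 𝒲.W i' d' := by
  obtain ⟨hc⟩ := (𝒲.kc_of_mem h).isCokernel
  have h0 := (𝒲.kc_of_mem h).w
  obtain ⟨f, hf⟩ := CokernelCofork.IsColimit.desc' hc (e.hom ≫ d')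
    (by rw [← Category.assoc, hi, w])
  obtain ⟨g, hg⟩ := CokernelCofork.IsColimit.desc' hk (e.inv ≫ d)
    (by rw [← hi]; simp [h0])
  simp only [Cofork.π_ofπ] at hf hg
  have e1 : Epi d := ⟨fun a b hab => Cofork.IsColimit.hom_ext hc (by simpa using hab)⟩
  have e2 : Epi d' := ⟨fun a b hab => Cofork.IsColimit.hom_ext hk (by simpa using hab)⟩
  refine 𝒲.iso_closed h ⟨Iso.refl _, e, ⟨f, g, ?_, ?_⟩, by simp [hi], by simpa using hf⟩
  · rw [← cancel_epi d]
    erw [reassoc_of% hf, hg]; simp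
  · rw [← cancel_epi d']
    erw [reassoc_of% hg, hf]; simp

theorem coker_part (𝒲 : WeaklyExactStructure C) {A' B' Z' Z P A'' : C} {i' : A' ⟶ B'}
    {d' : B' ⟶ Z'} (h : 𝒲.W i' d') {f : Z ⟶ Z'} {p : P ⟶ B'} {q : P ⟶ Z}
    (hP : IsPullback p q d' f) {i : A'' ⟶ P} (hq : 𝒲.W i q) :
    𝒲.W (biprod.lift p q) (biprod.desc d' (-f)) := by
  obtain ⟨hw, ⟨hk⟩, ⟨hc⟩⟩ := 𝒲.kc_of_mem hq
  have e1 : Epi q := ⟨fun a b hab => Cofork.IsColimit.hom_ext hc (by simpa using hab)⟩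
  have m1 : Mono i := ⟨fun a b hab => Fork.IsLimit.hom_ext hk (by simpa using hab)⟩
  have w1 : (i ≫ p) ≫ d' = 0 := by rw [Category.assoc, hP.w, reassoc_of% hw, zero_comp]
  have hlift : ∀ {T : C} (k : T ⟶ B') (hk0 : k ≫ d' = 0), ∃ l : T ⟶ A'', l ≫ i ≫ p = k := by
    intro T k hk0
    obtain ⟨l, hl⟩ := KernelFork.IsLimit.lift' hk (hP.lift k 0 (by simpa using hk0)) (by simp)
    refine ⟨l, ?_⟩
    simp only [Fork.ι_ofι] at hl
    erw [reassoc_of% hl]; simp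
  have hm : ∀ {T : C} (a b : T ⟶ A''), a ≫ i ≫ p = b ≫ i ≫ p → a = b := by
    intro T a b hab
    rw [← cancel_mono i]
    apply hP.hom_ext
    · simpa using hab
    · simp [hw]
  have hW : 𝒲.W (i ≫ p) d' := by
    refine W_of_kernel 𝒲 h (w := w1) (KernelFork.IsLimit.ofι _ _
      (fun k hk0 => (hlift k hk0).choose) (fun k hk0 => (hlift k hk0).choose_spec)
      (fun k hk0 m hm0 => hm _ _ (hm0.trans (hlift k hk0).choose_spec.symm)))
  obtain ⟨_, _, ⟨hc'⟩⟩ := 𝒲.kc_of_mem hW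
  have e2 : Epi d' := ⟨fun a b hab => Cofork.IsColimit.hom_ext hc' (by simpa using hab)⟩
  obtain ⟨S, g, j, hS, Z1, d1, hd1⟩ := 𝒲.pushout_mem hW i
  have hS' : IsPushout (i ≫ p) i biprod.inl (biprod.lift p q) := by
    have hdesc : ∀ {T : C} (a : B' ⟶ T) (b : P ⟶ T), (i ≫ p) ≫ a = i ≫ b →
        ∃ c : Z ⟶ T, q ≫ c = b - p ≫ a := by
      intro T a b hab
      obtain ⟨c, hc0⟩ := CokernelCofork.IsColimit.desc' hc (b - p ≫ a) (by
        rw [Preadditive.comp_sub, ← hab]; simp)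
      exact ⟨c, by simpa using hc0⟩
    refine ⟨⟨by ext <;> simp [hw]⟩, ⟨PushoutCocone.IsColimit.mk _
      (fun s => biprod.desc s.inl (hdesc s.inl s.inr s.condition).choose) ?_ ?_ ?_⟩⟩
    · intro s; simp
    · intro s
      rw [biprod.lift_desc, (hdesc s.inl s.inr s.condition).choose_spec]
      simp
    · intro s m h1 h2
      ext
      · simpa using h1
      · rw [biprod.inr_desc, ← cancel_epi q, (hdesc s.inl s.inr s.condition).choose_spec,
          ← h1, ← h2]
        simp [biprod.lift_eq]
  have w2 : biprod.lift p q ≫ biprod.desc d' (-f) = 0 := by simp [hP.w]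
  refine W_of_cokernel 𝒲 hd1 (hS.isoIsPushout _ _ hS') (by simp) (w := w2) ?_
  have hd : ∀ {T : C} (k : B' ⊞ Z ⟶ T), biprod.lift p q ≫ k = 0 →
      ∃ l : Z' ⟶ T, biprod.desc d' (-f) ≫ l = k := by
    intro T k hk0
    have hk1 : p ≫ biprod.inl ≫ k + q ≫ biprod.inr ≫ k = 0 := by
      rw [← hk0]; simp [biprod.lift_eq]
    obtain ⟨l, hl⟩ := CokernelCofork.IsColimit.desc' hc' (biprod.inl ≫ k) (by
      have := congrArg (fun x => i ≫ x) hk1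
      simpa [reassoc_of% hw] using this)
    simp only [Cofork.π_ofπ] at hl
    refine ⟨l, ?_⟩
    ext
    · simpa using hl
    · rw [biprod.inr_desc_assoc, ← cancel_epi q, ← sub_eq_zero, ← neg_eq_zero, ← hk1]
      rw [← hl]
      have := hP.w
      simp [reassoc_of% this, add_comm]
  have e3 : Epi (biprod.desc d' (-f)) := ⟨fun a b hab => by
    rw [← cancel_epi d']
    simpa using congrArg (fun x => biprod.inl ≫ x) hab⟩
  exact CokernelCofork.IsColimit.ofπ _ _ (fun k hk0 => (hd k hk0).choose)
    (fun k hk0 => (hd k hk0).choose_spec)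
    (fun k hk0 m hm0 => by rw [← cancel_epi (biprod.desc d' (-f)), hm0, (hd k hk0).choose_spec])

theorem ker_part (𝒲 : WeaklyExactStructure C) {A B Z P A'' : C} {i : A ⟶ B}
    {d : B ⟶ Z} (h : 𝒲.W i d) {q : P ⟶ Z} {j : A'' ⟶ P} (hq : 𝒲.W j q) {g : B ⟶ P}
    (hg : g ≫ q = d) :
    ∃ (K : C) (k : K ⟶ A'' ⊞ B), 𝒲.W k (biprod.desc j g) := by
  obtain ⟨hw, ⟨hk⟩, _⟩ := 𝒲.kc_of_mem hq
  have m1 : Mono j := ⟨fun a b hab => Fork.IsLimit.hom_ext hk (by simpa using hab)⟩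
  obtain ⟨P2, p2, q2, hP2, K, k, hk2⟩ := 𝒲.pullback_mem h q
  have hP' : IsPullback (biprod.snd : A'' ⊞ B ⟶ B) (biprod.desc j g) d q := by
    have hl : ∀ {T : C} (a : T ⟶ B) (b : T ⟶ P), a ≫ d = b ≫ q →
        ∃ c : T ⟶ A'', c ≫ j = b - a ≫ g := by
      intro T a b hab
      obtain ⟨c, hc0⟩ := KernelFork.IsLimit.lift' hk (b - a ≫ g) (by simp [hab, hg])
      exact ⟨c, by simpa using hc0⟩
    refine ⟨⟨by ext <;> simp [hw, hg]⟩, ⟨PullbackCone.IsLimit.mk _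
      (fun s => biprod.lift (hl s.fst s.snd s.condition).choose s.fst) ?_ ?_ ?_⟩⟩
    · intro s; simp
    · intro s
      rw [biprod.lift_desc, (hl s.fst s.snd s.condition).choose_spec]
      simp
    · intro s m h1 h2
      ext
      · rw [biprod.lift_fst, ← cancel_mono j, (hl s.fst s.snd s.condition).choose_spec,
          ← h1, ← h2]
        simp [biprod.desc_eq]
      · simpa using h1
  refine ⟨K, k ≫ (hP2.isoIsPullback _ _ hP').hom, 𝒲.iso_closed hk2
    ⟨Iso.refl _, hP2.isoIsPullback _ _ hP', Iso.refl _, by simp, by simp⟩⟩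

theorem yoneda_lift {X Y : C} {G : Cᵒᵖ ⥤ AddCommGrpCat.{u}} (f : preadditiveYoneda.obj X ⟶ G)
    (e : preadditiveYoneda.obj Y ⟶ G) [he : Epi e] :
    ∃ h : X ⟶ Y, preadditiveYoneda.map h ≫ e = f := by
  have hs : Function.Surjective (e.app (Opposite.op X)) := by
    have := (NatTrans.epi_iff_epi_app e).1 he (Opposite.op X)
    exact (AddCommGrpCat.epi_iff_surjective _).1 this
  obtain ⟨x, hx⟩ := hs (f.app (Opposite.op X) (𝟙 X))
  let x' : X ⟶ Y := x
  refine ⟨x', ?_⟩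
  ext T (g : T.unop ⟶ X)
  have h1 := ConcreteCategory.congr_hom (f.naturality g.op) (𝟙 X)
  have h2 := ConcreteCategory.congr_hom (e.naturality g.op) x'
  have h3 : f.app T (g ≫ 𝟙 X) = G.map g.op (f.app (Opposite.op X) (𝟙 X)) := h1
  have h4 : e.app T (g ≫ x') = G.map g.op (e.app (Opposite.op X) x') := h2
  rw [Category.comp_id] at h3
  have hx' : e.app (Opposite.op X) x' = f.app (Opposite.op X) (𝟙 X) := hx
  rw [hx', ← h3] at h4
  exact h4

instance yoneda_additive : (preadditiveYoneda (C := C)).Additive where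
  map_add {X Y f g} := by
    ext T (h : T.unop ⟶ X)
    exact Preadditive.comp_add _ _ _ h f g

instance yoneda_limits (J : Type) [SmallCategory J] [FinCategory J] :
    PreservesLimitsOfShape J (preadditiveYoneda (C := C)) := by
  apply preservesLimitsOfShape_of_evaluation
  intro X
  exact inferInstanceAs (PreservesLimitsOfShape J (preadditiveCoyoneda.obj X))

theorem isDefect_of (𝒲 : WeaklyExactStructure C) {F : Cᵒᵖ ⥤ AddCommGrpCat.{u}} {A B Z : C}
    {i : A ⟶ B} {d : B ⟶ Z} (h : 𝒲.W i d) {π : preadditiveYoneda.obj Z ⟶ F}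
    {w : preadditiveYoneda.map d ≫ π = 0} (hc : IsColimit (CokernelCofork.ofπ π w)) :
    IsDefect 𝒲 F :=
  ⟨A, B, Z, i, d, h, ⟨hc.coconePointUniqueUpToIso (colimit.isColimit _)⟩⟩

/-- The category of contravariant defects of a weakly exact structure is closed under kernels
and cokernels in `Mod 𝒜`. -/
theorem statement16 (𝒲 : WeaklyExactStructure C) (F F' : Cᵒᵖ ⥤ AddCommGrpCat.{u})
    (hF : IsDefect 𝒲 F) (hF' : IsDefect 𝒲 F') (φ : F ⟶ F') :
    IsDefect 𝒲 (kernel φ) ∧ IsDefect 𝒲 (cokernel φ) := by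
  obtain ⟨A, B, Z, i, d, hW, ⟨e⟩⟩ := hF
  obtain ⟨A', B', Z', i', d', hW', ⟨e'⟩⟩ := hF'
  obtain ⟨π, hπ⟩ : ∃ π, π = cokernel.π (preadditiveYoneda.map d) ≫ e.inv := ⟨_, rfl⟩
  obtain ⟨π', hπ'⟩ : ∃ π', π' = cokernel.π (preadditiveYoneda.map d') ≫ e'.inv := ⟨_, rfl⟩
  have : Epi π := by rw [hπ]; infer_instance
  have : Epi π' := by rw [hπ']; infer_instance
  have w : preadditiveYoneda.map d ≫ π = 0 := by simp [hπ]
  have w' : preadditiveYoneda.map d' ≫ π' = 0 := by simp [hπ']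
  have hex : (ShortComplex.mk _ _ w).Exact := by
    refine ShortComplex.exact_of_iso (S₁ := ShortComplex.mk _ _ (cokernel.condition (preadditiveYoneda.map d))) (ShortComplex.isoMk (Iso.refl _) (Iso.refl _) e.symm
      (by simp) (by simp [hπ]))
      (ShortComplex.exact_cokernel (preadditiveYoneda.map d))
  have hex' : (ShortComplex.mk _ _ w').Exact := by
    refine ShortComplex.exact_of_iso (S₁ := ShortComplex.mk _ _ (cokernel.condition (preadditiveYoneda.map d'))) (ShortComplex.isoMk (Iso.refl _) (Iso.refl _) e'.symm
      (by simp) (by simp [hπ']))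
      (ShortComplex.exact_cokernel (preadditiveYoneda.map d'))
  obtain ⟨f, hf⟩ : ∃ f : Z ⟶ Z', preadditiveYoneda.map f ≫ π' = π ≫ φ :=
    yoneda_lift _ _
  obtain ⟨f1, hf1⟩ : ∃ f1 : B ⟶ B', f1 ≫ d' = d ≫ f := by
    have hep : Epi (kernel.lift π' _ w') := hex'.epi_kernelLift
    obtain ⟨f1, h1⟩ := yoneda_lift (kernel.lift π' (preadditiveYoneda.map (d ≫ f))
      (by rw [Functor.map_comp, Category.assoc, hf, reassoc_of% w, zero_comp]))
      (kernel.lift π' _ w')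
    refine ⟨f1, preadditiveYoneda.map_injective ?_⟩
    have := congrArg (fun t => t ≫ kernel.ι π') h1
    simpa using this
  obtain ⟨P, p, q, hP, A'', j, hj⟩ := 𝒲.pullback_mem hW' f
  have hYP := hP.map (preadditiveYoneda (C := C))
  constructor
  · obtain ⟨K, k, hk⟩ := ker_part 𝒲 hW hj (hP.lift_snd f1 d hf1)
    obtain ⟨hjw, ⟨hjk⟩, _⟩ := 𝒲.kc_of_mem hj
    have hYk := KernelFork.mapIsLimit _ hjk (preadditiveYoneda (C := C))
    have hgq := hP.lift_snd f1 d hf1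
    generalize hP.lift f1 d hf1 = g at hk hgq
    have w1 : (preadditiveYoneda.map q ≫ π) ≫ φ = 0 := by
      rw [Category.assoc, ← hf, ← Functor.map_comp_assoc, ← hP.w, Functor.map_comp_assoc, w',
        comp_zero]
    have w2 : preadditiveYoneda.map (biprod.desc j g) ≫ kernel.lift φ _ w1 = 0 := by
      rw [← cancel_mono (kernel.ι φ)]
      rw [Category.assoc, kernel.lift_ι, ← Functor.map_comp_assoc]
      have : biprod.desc j g ≫ q = biprod.snd ≫ d := by ext <;> simp [hjw, hgq]
      rw [this, Functor.map_comp_assoc, w]; simp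
    have hepi : Epi (kernel.lift φ _ w1) := by
      rw [epi_iff_surjective_up_to_refinements]
      intro T x
      obtain ⟨T1, r1, _, z, hz⟩ := surjective_up_to_refinements_of_epi π (x ≫ kernel.ι φ)
      obtain ⟨T2, r2, _, b, hb⟩ := hex'.exact_up_to_refinements
        (z ≫ preadditiveYoneda.map f) (by
          dsimp
          rw [Category.assoc, hf, ← reassoc_of% hz]; simp)
      dsimp at b hb
      refine ⟨T2, r2 ≫ r1, inferInstance, hYP.lift b (r2 ≫ z) (by rw [← hb]; simp), ?_⟩
      rw [← cancel_mono (kernel.ι φ)]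
      simp [hz]
    have hexact : (ShortComplex.mk _ _ w2).Exact := by
      rw [ShortComplex.exact_iff_exact_up_to_refinements]
      intro T y hy
      dsimp at y hy
      have hy' : (y ≫ preadditiveYoneda.map q) ≫ π = 0 := by
        have := congrArg (fun t => t ≫ kernel.ι φ) hy
        simpa using this
      obtain ⟨T1, r, _, b, hb⟩ := hex.exact_up_to_refinements _ hy'
      dsimp at b hb
      obtain ⟨a, ha⟩ : ∃ a : T1 ⟶ preadditiveYoneda.obj A'',
          a ≫ preadditiveYoneda.map j = r ≫ y - b ≫ preadditiveYoneda.map g := by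
        obtain ⟨a, ha⟩ := KernelFork.IsLimit.lift' hYk (r ≫ y - b ≫ preadditiveYoneda.map g) (by
        rw [Preadditive.sub_comp, Category.assoc, Category.assoc, ← Functor.map_comp, hgq, hb,
          sub_self])
        exact ⟨a, ha⟩
      refine ⟨T1, r, inferInstance,
        a ≫ preadditiveYoneda.map biprod.inl + b ≫ preadditiveYoneda.map biprod.inr, ?_⟩
      dsimp
      rw [Preadditive.add_comp, Category.assoc, Category.assoc, ← Functor.map_comp,
        ← Functor.map_comp, biprod.inl_desc, biprod.inr_desc, ha]
      simp
    exact isDefect_of 𝒲 hk (w := w2) (hexact.gIsCokernel)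
  · have w3 : preadditiveYoneda.map (biprod.desc d' (-f)) ≫ π' ≫ cokernel.π φ = 0 := by
      rw [biprod.desc_eq, Functor.map_add, Functor.map_comp, Functor.map_comp, Functor.map_neg]
      simp [reassoc_of% w', reassoc_of% hf]
    refine isDefect_of 𝒲 (coker_part 𝒲 hW' hP hj) (w := w3) ?_
    have hd : ∀ {T : Cᵒᵖ ⥤ AddCommGrpCat.{u}} (k : preadditiveYoneda.obj Z' ⟶ T),
        preadditiveYoneda.map (biprod.desc d' (-f)) ≫ k = 0 →
        ∃ l : cokernel φ ⟶ T, (π' ≫ cokernel.π φ) ≫ l = k := by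
      intro T k hk
      have h1 : preadditiveYoneda.map d' ≫ k = 0 := by
        have := congrArg (fun t => preadditiveYoneda.map biprod.inl ≫ t) hk
        rwa [← Functor.map_comp_assoc, biprod.inl_desc, comp_zero] at this
      have h2 : preadditiveYoneda.map f ≫ k = 0 := by
        have := congrArg (fun t => preadditiveYoneda.map biprod.inr ≫ t) hk
        rw [← Functor.map_comp_assoc, biprod.inr_desc, comp_zero, Functor.map_neg,
          Preadditive.neg_comp, neg_eq_zero] at this
        exact this
      obtain ⟨l, hl⟩ := CokernelCofork.IsColimit.desc' hex'.gIsCokernel k h1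
      replace hl : π' ≫ l = k := hl
      have h3 : φ ≫ l = 0 := by
        rw [← cancel_epi π, ← reassoc_of% hf]
        erw [hl]
        rw [h2, comp_zero]
      refine ⟨cokernel.desc φ l h3, ?_⟩
      rw [Category.assoc, cokernel.π_desc]
      exact hl
    exact CokernelCofork.IsColimit.ofπ _ _ (fun k hk0 => (hd k hk0).choose)
      (fun k hk0 => (hd k hk0).choose_spec)
      (fun k hk0 m hm0 => by
        rw [← cancel_epi (π' ≫ cokernel.π φ), hm0, (hd k hk0).choose_spec])

end Statement

end WeaklyExactPaper
end

section
/- Let 𝒜 be an essentially small additive category with a weakly exact structure 𝒲, and let Mod 𝒜 denote the abelian category of additive functors 𝒜ᵒᵖ ⥤ Ab. A functor F ∈ Mod 𝒜 is isomorphic to the contravariant defect of some pair in 𝒲 if and only if F is both weakly effaceable with respect to 𝒲 and coherent. Moreover, the category of defects of 𝒲 is topologizing in the category of coherent right 𝒜-modules: it is closed under finite direct sums and under subquotients taken among coherent functors. -/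
open CategoryTheory CategoryTheory.Limits ZeroObject

universe w v u

namespace WeaklyExactPaper

section Statement

variable {C : Type u} [SmallCategory C] [Preadditive C] [HasZeroObject C] [HasBinaryBiproducts C]

/-- `F` is finitely generated: it admits an epimorphism from a representable functor. -/
def FinitelyGenerated (F : Cᵒᵖ ⥤ AddCommGrpCat.{u}) : Prop :=
  ∃ (X : C) (π : preadditiveYoneda.obj X ⟶ F), Epi π

/-- `F` is finitely presented: it is a cokernel of a morphism of representable functors. -/
def FinitelyPresented (F : Cᵒᵖ ⥤ AddCommGrpCat.{u}) : Prop :=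
  ∃ (X Y : C) (f : preadditiveYoneda.obj X ⟶ preadditiveYoneda.obj Y),
    Nonempty (F ≅ cokernel f)

/-- `F` is coherent: finitely presented, and every finitely generated subfunctor is finitely
presented. -/
def Coherent (F : Cᵒᵖ ⥤ AddCommGrpCat.{u}) : Prop :=
  FinitelyPresented F ∧
    ∀ (G : Cᵒᵖ ⥤ AddCommGrpCat.{u}) (φ : G ⟶ F), Mono φ → FinitelyGenerated G →
      FinitelyPresented G

/-- `F` is presented by `d : B ⟶ Z`, elementwise. -/
def Pres {B Z : C} (d : B ⟶ Z) (F : Cᵒᵖ ⥤ AddCommGrpCat.{u}) : Prop :=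
  ∃ π : preadditiveYoneda.obj Z ⟶ F,
    (∀ (T : C) (w : F.obj (Opposite.op T)), ∃ h : T ⟶ Z, (π.app (Opposite.op T)).hom h = w) ∧
    (∀ (T : C) (h : T ⟶ Z), (π.app (Opposite.op T)).hom h = 0 ↔ ∃ k : T ⟶ B, k ≫ d = h)

lemma epi_surj {F G : Cᵒᵖ ⥤ AddCommGrpCat.{u}} (φ : F ⟶ G) [Epi φ] (T : Cᵒᵖ) :
    Function.Surjective (φ.app T).hom := by
  have : Epi (φ.app T) := inferInstance
  exact (AddCommGrpCat.epi_iff_surjective _).1 this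

lemma mono_inj {F G : Cᵒᵖ ⥤ AddCommGrpCat.{u}} (φ : F ⟶ G) [Mono φ] (T : Cᵒᵖ) :
    Function.Injective (φ.app T).hom := by
  have : Mono (φ.app T) := inferInstance
  exact (AddCommGrpCat.mono_iff_injective _).1 this

lemma yoneda_app {Z : C} {F : Cᵒᵖ ⥤ AddCommGrpCat.{u}} (π : preadditiveYoneda.obj Z ⟶ F)
    {T S : C} (h : T ⟶ Z) (k : S ⟶ T) :
    (π.app (Opposite.op S)).hom (k ≫ h : S ⟶ Z)
      = (F.map k.op).hom ((π.app (Opposite.op T)).hom h) := by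
  have := π.naturality k.op
  exact congrArg (fun (f : (preadditiveYoneda.obj Z).obj (Opposite.op T) ⟶ F.obj (Opposite.op S)) =>
    f.hom h) this

lemma pres_of_iso {B Z : C} {d : B ⟶ Z} {F : Cᵒᵖ ⥤ AddCommGrpCat.{u}}
    (e : F ≅ cokernel (preadditiveYoneda.map d)) : Pres d F := by
  have hex : (ShortComplex.mk (preadditiveYoneda.map d) (cokernel.π (preadditiveYoneda.map d))
      (cokernel.condition _)).Exact :=
    ShortComplex.exact_cokernel _
  refine ⟨cokernel.π _ ≫ e.inv, fun T w => epi_surj (cokernel.π _ ≫ e.inv) _ w, fun T h => ?_⟩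
  have h1 := hex.map ((evaluation Cᵒᵖ AddCommGrpCat.{u}).obj (Opposite.op T))
  rw [ShortComplex.ab_exact_iff] at h1
  have hw := (ShortComplex.map (ShortComplex.mk (preadditiveYoneda.map d)
    (cokernel.π (preadditiveYoneda.map d)) (cokernel.condition _))
    ((evaluation Cᵒᵖ AddCommGrpCat.{u}).obj (Opposite.op T))).zero
  constructor
  · intro h0
    obtain ⟨k, hk⟩ := h1 h (by
      apply mono_inj e.inv (Opposite.op T)
      exact h0.trans (map_zero (e.inv.app (Opposite.op T)).hom).symm)
    exact ⟨k, hk⟩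
  · rintro ⟨k, rfl⟩
    have := congrArg (fun f => (e.inv.app (Opposite.op T)).hom (f.hom k)) hw
    refine this.trans ?_
    exact map_zero (e.inv.app (Opposite.op T)).hom

lemma iso_of_pres {B Z : C} {d : B ⟶ Z} {F : Cᵒᵖ ⥤ AddCommGrpCat.{u}}
    (hp : Pres d F) : Nonempty (F ≅ cokernel (preadditiveYoneda.map d)) := by
  obtain ⟨π, hs, hk⟩ := hp
  have w : preadditiveYoneda.map d ≫ π = 0 := by
    ext T k
    exact (hk T.unop _).2 ⟨k, rfl⟩
  let φ := cokernel.desc _ π w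
  have hφ : cokernel.π _ ≫ φ = π := cokernel.π_desc _ _ _
  have hφ' : ∀ (T : C) (h : T ⟶ Z), (φ.app (Opposite.op T)).hom
      (((cokernel.π (preadditiveYoneda.map d)).app (Opposite.op T)).hom h)
        = (π.app (Opposite.op T)).hom h := fun T h =>
    congrArg (fun f : preadditiveYoneda.obj Z ⟶ F => (f.app (Opposite.op T)).hom h) hφ
  have : ∀ T, IsIso (φ.app T) := by
    intro T
    have h1 : Mono (φ.app T) := by
      rw [AddCommGrpCat.mono_iff_injective]
      refine (injective_iff_map_eq_zero (φ.app T).hom).2 fun a ha => ?_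
      obtain ⟨h, rfl⟩ := epi_surj (cokernel.π (preadditiveYoneda.map d)) T a
      obtain ⟨k, rfl⟩ := (hk T.unop h).1 ((hφ' T.unop h).symm.trans ha)
      exact congrArg (fun f : preadditiveYoneda.obj B ⟶ cokernel (preadditiveYoneda.map d) =>
        (f.app T).hom k)
        (cokernel.condition (preadditiveYoneda.map d))
    have h2 : Epi (φ.app T) := by
      rw [AddCommGrpCat.epi_iff_surjective]
      intro a
      obtain ⟨h, rfl⟩ := hs T.unop a
      exact ⟨_, hφ' T.unop h⟩
    exact isIso_of_mono_of_epi _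
  have : IsIso φ := NatIso.isIso_of_isIso_app φ
  exact ⟨(asIso φ).symm⟩

lemma fp_iff (F : Cᵒᵖ ⥤ AddCommGrpCat.{u}) :
    FinitelyPresented F ↔ ∃ (X Y : C) (f : X ⟶ Y), Pres f F := by
  constructor
  · rintro ⟨X, Y, f, ⟨e⟩⟩
    obtain ⟨f, rfl⟩ := preadditiveYoneda.map_surjective f
    exact ⟨X, Y, f, pres_of_iso e⟩
  · rintro ⟨X, Y, f, h⟩
    exact ⟨X, Y, _, iso_of_pres h⟩

lemma isDefect_iff (𝒲 : WeaklyExactStructure C) (F : Cᵒᵖ ⥤ AddCommGrpCat.{u}) :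
    IsDefect 𝒲 F ↔ ∃ (B Z : C) (d : B ⟶ Z), AdmissibleEpic 𝒲 d ∧ Pres d F := by
  constructor
  · rintro ⟨A, B, Z, i, d, h, ⟨e⟩⟩
    exact ⟨B, Z, d, ⟨A, i, h⟩, pres_of_iso e⟩
  · rintro ⟨B, Z, d, ⟨A, i, h⟩, hp⟩
    exact ⟨A, B, Z, i, d, h, iso_of_pres hp⟩

lemma fp_of_isDefect {𝒲 : WeaklyExactStructure C} {F : Cᵒᵖ ⥤ AddCommGrpCat.{u}}
    (h : IsDefect 𝒲 F) : FinitelyPresented F := by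
  obtain ⟨A, B, Z, i, d, h, e⟩ := h
  exact ⟨B, Z, _, e⟩

lemma fg_of_fp {F : Cᵒᵖ ⥤ AddCommGrpCat.{u}} (h : FinitelyPresented F) :
    FinitelyGenerated F := by
  obtain ⟨X, Y, f, ⟨e⟩⟩ := h
  exact ⟨Y, cokernel.π f ≫ e.inv, inferInstance⟩

lemma eff_of_isDefect {𝒲 : WeaklyExactStructure C} {F : Cᵒᵖ ⥤ AddCommGrpCat.{u}}
    (h : IsDefect 𝒲 F) : WeaklyEffaceable 𝒲 F := by
  obtain ⟨B, Z, d, ⟨A, i, hW⟩, π, hs, hk⟩ := (isDefect_iff _ _).1 h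
  intro T z
  obtain ⟨h, rfl⟩ := hs T z
  obtain ⟨P, p, q, hpb, hq⟩ := 𝒲.pullback_mem hW h
  refine ⟨P, q, hq, ?_⟩
  refine (yoneda_app π h q).symm.trans ?_
  exact (hk P _).2 ⟨p, hpb.w⟩

lemma sub_isDefect {𝒲 : WeaklyExactStructure C} {F G : Cᵒᵖ ⥤ AddCommGrpCat.{u}}
    (h : IsDefect 𝒲 F) (φ : G ⟶ F) (hφ : Mono φ) (hG : FinitelyGenerated G) :
    IsDefect 𝒲 G := by
  obtain ⟨B, Z, d, ⟨A, i, hW⟩, π, hs, hk⟩ := (isDefect_iff _ _).1 h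
  obtain ⟨X, ρ, hρ⟩ := hG
  obtain ⟨t, ht⟩ := hs X ((φ.app _).hom ((ρ.app _).hom (𝟙 X)))
  obtain ⟨P, p, q, hpb, hq⟩ := 𝒲.pullback_mem hW t
  have key : ∀ (T : C) (u : T ⟶ X), (φ.app (Opposite.op T)).hom ((ρ.app (Opposite.op T)).hom u)
      = (π.app (Opposite.op T)).hom (u ≫ t : T ⟶ Z) := by
    intro T u
    rw [yoneda_app π t u, ht]
    have := yoneda_app (ρ ≫ φ) (𝟙 X) u
    rw [Category.comp_id] at this
    exact this
  refine (isDefect_iff _ _).2 ⟨P, X, q, hq, ρ, fun T w => epi_surj ρ _ w, fun T u => ?_⟩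
  have h0 : (ρ.app (Opposite.op T)).hom u = 0 ↔
      (φ.app (Opposite.op T)).hom ((ρ.app (Opposite.op T)).hom u) = 0 :=
    (map_eq_zero_iff _ (mono_inj φ _)).symm
  rw [h0, key, hk]
  constructor
  · rintro ⟨k, e⟩
    exact ⟨hpb.lift k u e, hpb.lift_snd _ _ _⟩
  · rintro ⟨k, rfl⟩
    exact ⟨k ≫ p, by rw [Category.assoc, hpb.w, Category.assoc]⟩

/-- Key lemma: an admissible epic stays admissible after adding a summand. -/
lemma desc_admissible (𝒲 : WeaklyExactStructure C) {B X Z : C} {g : B ⟶ Z}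
    (hg : AdmissibleEpic 𝒲 g) (f : X ⟶ Z) : AdmissibleEpic 𝒲 (biprod.desc g f) := by
  obtain ⟨A, i, hW⟩ := hg
  obtain ⟨P, p, q, hpb, A', j, hj⟩ := 𝒲.pullback_mem hW (-f)
  obtain ⟨w, ⟨hker⟩, ⟨hcok⟩⟩ := 𝒲.kc_of_mem hW
  obtain ⟨w', ⟨hker'⟩, ⟨hcok'⟩⟩ := 𝒲.kc_of_mem hj
  have gepi : Epi g := Cofork.IsColimit.epi hcok
  have qepi : Epi q := Cofork.IsColimit.epi hcok'
  -- the kernel `A ⟶ P`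
  let l : A ⟶ P := hpb.lift i 0 (by rw [w, zero_comp])
  have lp : l ≫ p = i := hpb.lift_fst _ _ _
  have lq : l ≫ q = 0 := hpb.lift_snd _ _ _
  -- any map killed by `l` factors through `q`
  have hfac : ∀ {T : C} (c : P ⟶ T), l ≫ c = 0 → ∃ x : X ⟶ T, q ≫ x = c := by
    intro T c hc
    have hjp : (j ≫ p) ≫ g = 0 := by
      rw [Category.assoc, hpb.w, ← Category.assoc, w', zero_comp]
    obtain ⟨m, hm⟩ := KernelFork.IsLimit.lift' hker (j ≫ p) hjp
    have hm' : m ≫ i = j ≫ p := hm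
    have hjl : j = m ≫ l := by
      apply hpb.hom_ext
      · rw [Category.assoc, lp, hm']
      · rw [Category.assoc, lq, w', comp_zero]
    obtain ⟨x, hx⟩ := CokernelCofork.IsColimit.desc' hcok' c
      (by rw [hjl, Category.assoc, hc, comp_zero])
    exact ⟨x, hx⟩
  obtain ⟨S, a, b, hpo, Z', d', hS⟩ := 𝒲.pushout_mem hW l
  have hpo' : IsPushout i l (biprod.inl : B ⟶ B ⊞ X) (biprod.lift p q) := by
    refine ⟨⟨by ext <;> simp [lp, lq]⟩, ⟨PushoutCocone.IsColimit.mk _ ?_ ?_ ?_ ?_⟩⟩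
    · intro s
      exact biprod.desc s.inl (hfac (s.inr - p ≫ s.inl) (by
        rw [Preadditive.comp_sub, ← Category.assoc, lp, s.condition, sub_self])).choose
    · intro s
      simp
    · intro s
      have := (hfac (s.inr - p ≫ s.inl) (by
        rw [Preadditive.comp_sub, ← Category.assoc, lp, s.condition, sub_self])).choose_spec
      rw [biprod.lift_desc, this]
      abel
    · intro s m h1 h2
      have := (hfac (s.inr - p ≫ s.inl) (by
        rw [Preadditive.comp_sub, ← Category.assoc, lp, s.condition, sub_self])).choose_spec
      apply biprod.hom_ext'
      · rw [h1, biprod.inl_desc]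
      · rw [biprod.inr_desc, ← cancel_epi q, this, ← h1, ← h2, biprod.lift_eq]
        simp
  let e : S ≅ B ⊞ X := hpo.isoIsPushout _ _ hpo'
  have hbe : b ≫ e.hom = biprod.lift p q := hpo.inr_isoIsPushout_hom _ _ hpo'
  have hcz : biprod.lift p q ≫ biprod.desc g f = 0 := by
    rw [biprod.lift_desc, hpb.w]; simp
  obtain ⟨wS, -, ⟨hcokS⟩⟩ := 𝒲.kc_of_mem hS
  have dS : Epi d' := Cofork.IsColimit.epi hcokS
  have dgf : Epi (biprod.desc g f) := by
    have : Epi (biprod.inl ≫ biprod.desc g f) := by rw [biprod.inl_desc]; exact gepi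
    exact epi_of_epi biprod.inl _
  obtain ⟨α, hα⟩ := CokernelCofork.IsColimit.desc' hcokS (e.hom ≫ biprod.desc g f)
    (by rw [← Category.assoc, hbe, hcz])
  have hα : d' ≫ α = e.hom ≫ biprod.desc g f := hα
  -- the inverse
  have hinv : biprod.lift p q ≫ e.inv ≫ d' = 0 := by
    rw [← hbe, Category.assoc, e.hom_inv_id_assoc, wS]
  obtain ⟨β, hβ⟩ := CokernelCofork.IsColimit.desc' hcok (biprod.inl ≫ e.inv ≫ d') (by
    have : i ≫ biprod.inl = l ≫ biprod.lift p q := hpo'.w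
    rw [← Category.assoc, this, Category.assoc, hinv, comp_zero])
  have hβ : g ≫ β = biprod.inl ≫ e.inv ≫ d' := hβ
  have hβ' : biprod.desc g f ≫ β = e.inv ≫ d' := by
    apply biprod.hom_ext'
    · rw [biprod.inl_desc_assoc, hβ]
    · rw [biprod.inr_desc_assoc, ← cancel_epi q]
      have h1 : p ≫ (biprod.inl ≫ e.inv ≫ d') + q ≫ (biprod.inr ≫ e.inv ≫ d') = 0 := by
        rw [← hinv, biprod.lift_eq]; simp
      rw [← hβ, ← Category.assoc p, hpb.w] at h1
      rw [← sub_eq_zero, ← neg_eq_zero, ← h1]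
      simp
      abel
  refine ⟨P, biprod.lift p q, 𝒲.iso_closed hS ⟨Iso.refl _, e, ⟨α, β, ?_, ?_⟩, ?_, hα⟩⟩
  · rw [← cancel_epi d', ← Category.assoc, hα, Category.assoc, hβ']; simp
  · rw [← cancel_epi (biprod.desc g f), ← Category.assoc, hβ', Category.assoc, hα]; simp
  · simpa using hbe

lemma isDefect_of_eff {𝒲 : WeaklyExactStructure C} {F : Cᵒᵖ ⥤ AddCommGrpCat.{u}}
    (he : WeaklyEffaceable 𝒲 F) (hF : FinitelyPresented F) : IsDefect 𝒲 F := by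
  obtain ⟨X, Y, f, π, hs, hk⟩ := (fp_iff F).1 hF
  obtain ⟨Y', g, hg, h0⟩ := he Y ((π.app _).hom (𝟙 Y))
  have h1 := yoneda_app π (𝟙 Y) g
  rw [Category.comp_id] at h1
  obtain ⟨s, hs'⟩ := (hk Y' g).1 (h1.trans h0)
  refine (isDefect_iff _ _).2 ⟨_, _, _, desc_admissible 𝒲 hg f, π, hs, fun T h => ?_⟩
  rw [hk]
  constructor
  · rintro ⟨k, rfl⟩
    exact ⟨k ≫ biprod.inr, by simp⟩
  · rintro ⟨k, rfl⟩
    refine ⟨k ≫ biprod.desc s (𝟙 X), ?_⟩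
    rw [Category.assoc]
    congr 1
    ext <;> simp [hs']

lemma sum_isDefect {𝒲 : WeaklyExactStructure C} {F G : Cᵒᵖ ⥤ AddCommGrpCat.{u}}
    (hF : IsDefect 𝒲 F) (hG : IsDefect 𝒲 G) : IsDefect 𝒲 (F ⊞ G) := by
  obtain ⟨B₁, Z₁, d₁, ⟨A₁, i₁, hW₁⟩, π₁, hs₁, hk₁⟩ := (isDefect_iff _ _).1 hF
  obtain ⟨B₂, Z₂, d₂, ⟨A₂, i₂, hW₂⟩, π₂, hs₂, hk₂⟩ := (isDefect_iff _ _).1 hG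
  let π : preadditiveYoneda.obj (Z₁ ⊞ Z₂) ⟶ F ⊞ G :=
    biprod.lift (preadditiveYoneda.map biprod.fst ≫ π₁) (preadditiveYoneda.map biprod.snd ≫ π₂)
  have hfst : ∀ (T : C) (h : T ⟶ Z₁ ⊞ Z₂),
      ((biprod.fst : F ⊞ G ⟶ F).app (Opposite.op T)).hom ((π.app (Opposite.op T)).hom h)
      = (π₁.app (Opposite.op T)).hom (h ≫ biprod.fst : T ⟶ Z₁) := fun T h =>
    congrArg (fun f : preadditiveYoneda.obj (Z₁ ⊞ Z₂) ⟶ F => (f.app (Opposite.op T)).hom h)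
      (show π ≫ biprod.fst = _ from biprod.lift_fst _ _)
  have hsnd : ∀ (T : C) (h : T ⟶ Z₁ ⊞ Z₂),
      ((biprod.snd : F ⊞ G ⟶ G).app (Opposite.op T)).hom ((π.app (Opposite.op T)).hom h)
      = (π₂.app (Opposite.op T)).hom (h ≫ biprod.snd : T ⟶ Z₂) := fun T h =>
    congrArg (fun f : preadditiveYoneda.obj (Z₁ ⊞ Z₂) ⟶ G => (f.app (Opposite.op T)).hom h)
      (show π ≫ biprod.snd = _ from biprod.lift_snd _ _)
  have htot : ∀ (T : Cᵒᵖ) (x : (F ⊞ G).obj T),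
      ((biprod.inl : F ⟶ F ⊞ G).app T).hom (((biprod.fst : F ⊞ G ⟶ F).app T).hom x) +
      ((biprod.inr : G ⟶ F ⊞ G).app T).hom (((biprod.snd : F ⊞ G ⟶ G).app T).hom x) = x :=
    fun T x => congrArg (fun f : F ⊞ G ⟶ F ⊞ G => (f.app T).hom x) (biprod.total (X := F) (Y := G))
  have hext : ∀ (T : Cᵒᵖ) (x y : (F ⊞ G).obj T),
      ((biprod.fst : F ⊞ G ⟶ F).app T).hom x = ((biprod.fst : F ⊞ G ⟶ F).app T).hom y →
      ((biprod.snd : F ⊞ G ⟶ G).app T).hom x = ((biprod.snd : F ⊞ G ⟶ G).app T).hom y →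
      x = y := by
    intro T x y h1 h2
    rw [← htot T x, ← htot T y, h1, h2]
  refine (isDefect_iff _ _).2 ⟨_, _, biprod.map d₁ d₂, ⟨_, _, 𝒲.sum_mem hW₁ hW₂⟩, π, ?_, ?_⟩
  · intro T w
    obtain ⟨h₁, e₁⟩ := hs₁ T (((biprod.fst : F ⊞ G ⟶ F).app _).hom w)
    obtain ⟨h₂, e₂⟩ := hs₂ T (((biprod.snd : F ⊞ G ⟶ G).app _).hom w)
    refine ⟨biprod.lift h₁ h₂, hext _ _ _ ?_ ?_⟩
    · rw [hfst, biprod.lift_fst, e₁]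
    · rw [hsnd, biprod.lift_snd, e₂]
  · intro T h
    constructor
    · intro h0
      obtain ⟨k₁, e₁⟩ := (hk₁ T (h ≫ biprod.fst)).1 (by rw [← hfst, h0, map_zero])
      obtain ⟨k₂, e₂⟩ := (hk₂ T (h ≫ biprod.snd)).1 (by rw [← hsnd, h0, map_zero])
      refine ⟨biprod.lift k₁ k₂, ?_⟩
      apply biprod.hom_ext
      · simp [e₁]
      · simp [e₂]
    · rintro ⟨k, rfl⟩
      apply hext
      · rw [hfst, map_zero, hk₁]
        exact ⟨k ≫ biprod.fst, by simp⟩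
      · rw [hsnd, map_zero, hk₂]
        exact ⟨k ≫ biprod.snd, by simp⟩

/-- A module is a defect of `𝒲` iff it is weakly effaceable and coherent; moreover the
defects form a topologizing subcategory of the coherent modules: they are closed under
finite direct sums and under subquotients taken among coherent functors. -/
theorem statement17 (𝒲 : WeaklyExactStructure C) :
    (∀ F : Cᵒᵖ ⥤ AddCommGrpCat.{u}, F.Additive →
      (IsDefect 𝒲 F ↔ (WeaklyEffaceable 𝒲 F ∧ Coherent F))) ∧
    (∀ F G : Cᵒᵖ ⥤ AddCommGrpCat.{u}, IsDefect 𝒲 F → IsDefect 𝒲 G → IsDefect 𝒲 (F ⊞ G)) ∧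
    (∀ (F G : Cᵒᵖ ⥤ AddCommGrpCat.{u}) (φ : G ⟶ F), Mono φ → IsDefect 𝒲 F → Coherent G →
      IsDefect 𝒲 G) ∧
    (∀ (F G : Cᵒᵖ ⥤ AddCommGrpCat.{u}) (φ : F ⟶ G), Epi φ → IsDefect 𝒲 F → Coherent G →
      IsDefect 𝒲 G) := by
  refine ⟨fun F _ => ⟨fun h => ⟨eff_of_isDefect h, fp_of_isDefect h, fun G φ hφ hG =>
    fp_of_isDefect (sub_isDefect h φ hφ hG)⟩, fun h => isDefect_of_eff h.1 h.2.1⟩,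
    fun F G => sum_isDefect, fun F G φ hφ hF hG => sub_isDefect hF φ hφ (fg_of_fp hG.1),
    fun F G φ hφ hF hG => isDefect_of_eff (fun T z => ?_) hG.1⟩
  obtain ⟨x, rfl⟩ := epi_surj φ _ z
  obtain ⟨Y, g, hg, h0⟩ := eff_of_isDefect hF T x
  refine ⟨Y, g, hg, ?_⟩
  have h1 := congrArg (fun f : F.obj (Opposite.op T) ⟶ G.obj (Opposite.op Y) => f.hom x)
    (φ.naturality g.op)
  refine h1.symm.trans ?_
  refine (congrArg (φ.app (Opposite.op Y)).hom h0).trans (map_zero _)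

end Statement

end WeaklyExactPaper
end
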